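/- arXiv:1611.05151 — 4 statements merged into one kernel-verified Lean document; each statement's English description precedes it below -/
import Mathlib

section
/- Let N ≥ 1 and let C = (C_{ijkl}) be a real four-index array on {1, …, N} satisfying the strong convexity condition with constant c₀ > 0: Σ_{i,j,k,l} C_{ijkl} ε_{ij} ε_{kl} ≥ c₀ Σ_{i,j} ε_{ij}² for every real N×N matrix ε. Let M be a real N×N matrix with det M > 0, and suppose there is L > 0 such that Σ_{i,j} ε_{ij}² ≤ L² Σ_{i,j} (εM)_{ij}² for every real N×N matrix ε. Then the push-forward tensor C̃_{iqkp} = (1/det M) Σ_{j,l} C_{ijkl} M_{pl} M_{qj} satisfies the strong convexity condition with the constant c̃₀ = c₀ / (L² det M): Σ_{i,q,k,p} C̃_{iqkp} ε_{iq} ε_{kp} ≥ c̃₀ Σ_{i,q} ε_{iq}² for every real N×N matrix ε. -/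
/-- The push-forward of a four-index tensor `C` by an invertible matrix `M`:
`C̃_{iqkp} = (1/det M) Σ_{j,l} C_{ijkl} M_{pl} M_{qj}`. -/
noncomputable def pushForward {N : ℕ} (C : Fin N → Fin N → Fin N → Fin N → ℝ)
    (M : Matrix (Fin N) (Fin N) ℝ) : Fin N → Fin N → Fin N → Fin N → ℝ :=
  fun i q k p => (1 / M.det) * ∑ j, ∑ l, C i j k l * M p l * M q j

/-- if `C` is strongly convex with constant `c₀ > 0`, `det M > 0`, and
`Σ ε_{ij}² ≤ L² Σ (εM)_{ij}²` for all `ε`, then the push-forward tensor `C̃` is strongly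
convex with the constant `c₀ / (L² det M)`. -/
theorem pushForward_strong_convexity (N : ℕ) (hN : 1 ≤ N)
    (C : Fin N → Fin N → Fin N → Fin N → ℝ) (c₀ : ℝ) (hc₀ : 0 < c₀)
    (hconv : ∀ ε : Matrix (Fin N) (Fin N) ℝ,
      c₀ * ∑ i, ∑ j, (ε i j) ^ 2
        ≤ ∑ i, ∑ j, ∑ k, ∑ l, C i j k l * ε i j * ε k l)
    (M : Matrix (Fin N) (Fin N) ℝ) (hM : 0 < M.det)
    (L : ℝ) (hL : 0 < L)
    (hLip : ∀ ε : Matrix (Fin N) (Fin N) ℝ,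
      ∑ i, ∑ j, (ε i j) ^ 2 ≤ L ^ 2 * ∑ i, ∑ j, ((ε * M) i j) ^ 2) :
    ∀ ε : Matrix (Fin N) (Fin N) ℝ,
      (c₀ / (L ^ 2 * M.det)) * ∑ i, ∑ q, (ε i q) ^ 2
        ≤ ∑ i, ∑ q, ∑ k, ∑ p, pushForward C M i q k p * ε i q * ε k p := by
  intro ε
  have key : ∑ i, ∑ q, ∑ k, ∑ p, pushForward C M i q k p * ε i q * ε k p
      = (1 / M.det) * ∑ i, ∑ j, ∑ k, ∑ l, C i j k l * (ε * M) i j * (ε * M) k l := by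
    rw [Finset.mul_sum]
    refine Finset.sum_congr rfl fun i _ => ?_
    rw [Finset.sum_comm, Finset.mul_sum]
    have h : ∀ k, ∑ q, ∑ p, pushForward C M i q k p * ε i q * ε k p
        = ∑ j, ∑ l, (1 / M.det) * (C i j k l * (ε * M) i j * (ε * M) k l) := by
      intro k
      simp only [pushForward, Matrix.mul_apply, Finset.mul_sum, Finset.sum_mul]
      -- order of summation on the left: q, p, j, l
      calc _ = ∑ q, ∑ j, ∑ p, ∑ l, 1 / M.det * (C i j k l * M p l * M q j) * ε i q * ε k p :=
            Finset.sum_congr rfl fun q _ => Finset.sum_comm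
        _ = ∑ j, ∑ q, ∑ p, ∑ l, 1 / M.det * (C i j k l * M p l * M q j) * ε i q * ε k p :=
            Finset.sum_comm
        _ = ∑ j, ∑ q, ∑ l, ∑ p, 1 / M.det * (C i j k l * M p l * M q j) * ε i q * ε k p :=
            Finset.sum_congr rfl fun j _ => Finset.sum_congr rfl fun q _ => Finset.sum_comm
        _ = ∑ j, ∑ l, ∑ q, ∑ p, 1 / M.det * (C i j k l * M p l * M q j) * ε i q * ε k p :=
            Finset.sum_congr rfl fun j _ => Finset.sum_comm
        _ = ∑ j, ∑ l, ∑ p, ∑ q, 1 / M.det * (C i j k l * M p l * M q j) * ε i q * ε k p :=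
            Finset.sum_congr rfl fun j _ => Finset.sum_congr rfl fun l _ => Finset.sum_comm
        _ = _ := by
            refine Finset.sum_congr rfl fun j _ => Finset.sum_congr rfl fun l _ =>
              Finset.sum_congr rfl fun p _ => Finset.sum_congr rfl fun q _ => ?_
            ring
    simp only [h]
    rw [Finset.sum_comm]
    simp only [Finset.mul_sum]
  rw [key]
  have h1 := hconv (ε * M)
  have h2 := hLip ε
  calc (c₀ / (L ^ 2 * M.det)) * ∑ i, ∑ q, (ε i q) ^ 2
      ≤ (c₀ / (L ^ 2 * M.det)) * (L ^ 2 * ∑ i, ∑ j, ((ε * M) i j) ^ 2) := by gcongr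
    _ = (1 / M.det) * (c₀ * ∑ i, ∑ j, ((ε * M) i j) ^ 2) := by
        field_simp
    _ ≤ _ := by gcongr
end

section
/- Let λ, μ ∈ ℝ and let t : (1,2) → ℝ be a function with |t(r)| ≤ B for all r ∈ (1,2) and some constant B. For r ∈ (1,2), let C(r) be the 2-dimensional elasticity tensor with residual stress whose Lamé parameters are λ, μ and whose residual stress matrix T(r) is symmetric with (1,1)-entry t(r), and let C̃(r) be the push-forward of C(r) by the Jacobian matrix M(r) = diag(1/2, r/(2(r−1))) of the singular cloaking transformation. Then C̃(r)_{1111} = ((r−1)/r)(λ + 2μ + t(r)), this quantity tends to 0 as r → 1⁺, and consequently there is no constant c₀ > 0 such that C̃(r) satisfies the strong convexity condition with constant c₀ for every r ∈ (1,2). -/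
/-- The Kronecker delta. -/
noncomputable def kron {N : ℕ} (i j : Fin N) : ℝ := if i = j then 1 else 0

/-- The elasticity tensor with residual stress:
`C_{ijkl} = λ δ_{ij} δ_{kl} + μ (δ_{ik} δ_{jl} + δ_{il} δ_{jk}) + t_{jl} δ_{ik}`. -/
noncomputable def resTensor {N : ℕ} (lam mu : ℝ) (T : Matrix (Fin N) (Fin N) ℝ) :
    Fin N → Fin N → Fin N → Fin N → ℝ :=
  fun i j k l =>
    lam * kron i j * kron k l + mu * (kron i k * kron j l + kron i l * kron j k)
      + T j l * kron i k

/-- The Jacobian `diag(1/2, r/(2(r−1)))` (in polar coordinates) of the singular cloaking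
transformation `F₀(x) = (1 + |x|/2) x/|x|` in dimension 2. -/
noncomputable def cloakJac (r : ℝ) : Matrix (Fin 2) (Fin 2) ℝ :=
  Matrix.diagonal ![1 / 2, r / (2 * (r - 1))]

/-- with a bounded residual stress entry `t(r) = T(r)₁₁`, the transformed
tensor satisfies `C̃(r)₁₁₁₁ = ((r−1)/r)(λ + 2μ + t(r))`, this entry tends to `0` as
`r → 1⁺`, and there is no constant `c₀ > 0` for which `C̃(r)` satisfies the strong
convexity condition for every `r ∈ (1,2)`. -/
theorem cloaking_tensor_degenerates (lam mu B : ℝ) (t : ℝ → ℝ)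
    (hB : ∀ r ∈ Set.Ioo (1 : ℝ) 2, |t r| ≤ B)
    (T : ℝ → Matrix (Fin 2) (Fin 2) ℝ)
    (hTsymm : ∀ r, ∀ j l, T r j l = T r l j)
    (hT11 : ∀ r, T r 0 0 = t r) :
    (∀ r ∈ Set.Ioo (1 : ℝ) 2,
      pushForward (resTensor lam mu (T r)) (cloakJac r) 0 0 0 0
        = ((r - 1) / r) * (lam + 2 * mu + t r)) ∧
    Filter.Tendsto
      (fun r => pushForward (resTensor lam mu (T r)) (cloakJac r) 0 0 0 0)
      (nhdsWithin 1 (Set.Ioo (1 : ℝ) 2)) (nhds 0) ∧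
    ¬ ∃ c₀ > (0 : ℝ), ∀ r ∈ Set.Ioo (1 : ℝ) 2, ∀ ε : Matrix (Fin 2) (Fin 2) ℝ,
        c₀ * ∑ i, ∑ j, (ε i j) ^ 2
          ≤ ∑ i, ∑ j, ∑ k, ∑ l,
              pushForward (resTensor lam mu (T r)) (cloakJac r) i j k l
                * ε i j * ε k l := by
  have h1 : ∀ r ∈ Set.Ioo (1 : ℝ) 2,
      pushForward (resTensor lam mu (T r)) (cloakJac r) 0 0 0 0
        = ((r - 1) / r) * (lam + 2 * mu + t r) := by
    intro r hr
    have hr1 : r - 1 ≠ 0 := (sub_pos.2 hr.1).ne'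
    have hr0 : r ≠ 0 := (zero_lt_one.trans hr.1).ne'
    simp [pushForward, resTensor, cloakJac, kron, Fin.sum_univ_two, Matrix.det_diagonal, hT11]
    field_simp
    ring
  have h2 : Filter.Tendsto
      (fun r => pushForward (resTensor lam mu (T r)) (cloakJac r) 0 0 0 0)
      (nhdsWithin 1 (Set.Ioo (1 : ℝ) 2)) (nhds 0) := by
    have hg : Filter.Tendsto (fun r : ℝ => (r - 1) * (|lam + 2 * mu| + B))
        (nhdsWithin 1 (Set.Ioo (1 : ℝ) 2)) (nhds 0) := by
      have hc : Continuous (fun r : ℝ => (r - 1) * (|lam + 2 * mu| + B)) := by fun_prop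
      have := (hc.tendsto 1).mono_left (nhdsWithin_le_nhds (s := Set.Ioo (1 : ℝ) 2))
      simpa using this
    refine squeeze_zero_norm' ?_ hg
    filter_upwards [self_mem_nhdsWithin] with r hr
    rw [h1 r hr, Real.norm_eq_abs, abs_mul]
    have hp : 0 < r - 1 := by linarith [hr.1]
    have hr1 : (1 : ℝ) ≤ r := hr.1.le
    have ha : |(r - 1) / r| ≤ r - 1 := by
      rw [abs_of_nonneg (by positivity)]
      exact div_le_self hp.le hr1
    have hb : |lam + 2 * mu + t r| ≤ |lam + 2 * mu| + B :=
      (abs_add_le _ _).trans (by linarith [hB r hr])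
    exact mul_le_mul ha hb (abs_nonneg _) hp.le
  refine ⟨h1, h2, ?_⟩
  rintro ⟨c, hc, h⟩
  have hne : (nhdsWithin (1 : ℝ) (Set.Ioo (1 : ℝ) 2)).NeBot := by
    rw [nhdsWithin_Ioo_eq_nhdsGT (by norm_num)]
    infer_instance
  have hle : c ≤ 0 := by
    refine ge_of_tendsto h2 ?_
    filter_upwards [self_mem_nhdsWithin] with r hr
    have := h r hr (Matrix.of ![![1, 0], ![0, 0]])
    simpa [Fin.sum_univ_two] using this
  linarith
end

section
/- Let λ, μ ∈ ℝ and let t : (1,2) → ℝ satisfy μ + t(r) ≥ c > 0 for all r ∈ (1,2) and some constant c. For r ∈ (1,2), let C(r) be the 2-dimensional elasticity tensor with residual stress whose Lamé parameters are λ, μ and whose residual stress matrix T(r) is symmetric with (2,2)-entry t(r), and let C̃(r) be the push-forward of C(r) by M(r) = diag(1/2, r/(2(r−1))). Then C̃(r)_{1212} = (r/(r−1))(μ + t(r)), and C̃(r)_{1212} tends to +∞ as r → 1⁺; i.e. the transformed cloaking tensor has a singular (blowing-up) entry at the inner cloaking interface. -/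
/-- if `μ + t(r) ≥ c > 0` where `t(r) = T(r)₂₂`, then the transformed
cloaking tensor satisfies `C̃(r)₁₂₁₂ = (r/(r−1))(μ + t(r))`, and this entry blows up
to `+∞` as `r → 1⁺`. -/
theorem cloaking_tensor_blows_up (lam mu c : ℝ) (hc : 0 < c) (t : ℝ → ℝ)
    (ht : ∀ r ∈ Set.Ioo (1 : ℝ) 2, c ≤ mu + t r)
    (T : ℝ → Matrix (Fin 2) (Fin 2) ℝ)
    (hTsymm : ∀ r, ∀ j l, T r j l = T r l j)
    (hT22 : ∀ r, T r 1 1 = t r) :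
    (∀ r ∈ Set.Ioo (1 : ℝ) 2,
      pushForward (resTensor lam mu (T r)) (cloakJac r) 0 1 0 1
        = (r / (r - 1)) * (mu + t r)) ∧
    Filter.Tendsto
      (fun r => pushForward (resTensor lam mu (T r)) (cloakJac r) 0 1 0 1)
      (nhdsWithin 1 (Set.Ioo (1 : ℝ) 2)) Filter.atTop := by
  have key : ∀ r ∈ Set.Ioo (1 : ℝ) 2,
      pushForward (resTensor lam mu (T r)) (cloakJac r) 0 1 0 1
        = (r / (r - 1)) * (mu + t r) := by
    intro r hr
    have h1 : r - 1 ≠ 0 := (sub_pos.mpr hr.1).ne'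
    have h0 : r ≠ 0 := (zero_lt_one.trans hr.1).ne'
    simp [pushForward, resTensor, cloakJac, kron, Fin.sum_univ_two, Matrix.det_fin_two, hT22]
    field_simp
    try ring
  refine ⟨key, ?_⟩
  have hlim : Filter.Tendsto (fun r : ℝ => c * (r - 1)⁻¹)
      (nhdsWithin 1 (Set.Ioo (1 : ℝ) 2)) Filter.atTop := by
    apply Filter.Tendsto.const_mul_atTop hc
    apply Filter.Tendsto.comp tendsto_inv_nhdsGT_zero
    apply tendsto_nhdsWithin_of_tendsto_nhds_of_eventually_within
    · have : Filter.Tendsto (fun r : ℝ => r - 1) (nhds 1) (nhds (1 - 1)) :=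
        (continuous_id.sub continuous_const).tendsto 1
      rw [sub_self] at this
      exact this.mono_left nhdsWithin_le_nhds
    · filter_upwards [self_mem_nhdsWithin] with r hr
      exact sub_pos.mpr hr.1
  refine Filter.tendsto_atTop_mono' _ ?_ hlim
  filter_upwards [self_mem_nhdsWithin] with r hr
  rw [key r hr]
  have h1 : 0 < (r - 1)⁻¹ := inv_pos.mpr (sub_pos.mpr hr.1)
  have h2 : (r - 1)⁻¹ ≤ r / (r - 1) := by
    rw [div_eq_mul_inv]
    nlinarith [hr.1]
  calc c * (r - 1)⁻¹ = (r - 1)⁻¹ * c := mul_comm _ _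
    _ ≤ (r / (r - 1)) * (mu + t r) :=
      mul_le_mul h2 (ht r hr) hc.le (h1.le.trans h2)
end

section
/- Let λ ∈ ℝ and μ ≠ 0, and let C_{ijkl} = λδ_{ij}δ_{kl} + μ(δ_{ik}δ_{jl} + δ_{il}δ_{jk}) be the 2-dimensional isotropic (Lamé) elasticity tensor, which satisfies both the major symmetry C_{ijkl} = C_{klij} and the minor symmetry C_{ijkl} = C_{jikl}. Let M = diag(m₁, m₂) with m₁, m₂ > 0 and m₁ ≠ m₂. Then the push-forward tensor C̃_{iqkp} = (1/det M) Σ_{j,l} C_{ijkl} M_{pl} M_{qj} satisfies C̃₁₂₁₂ = (m₂/m₁) μ and C̃₂₁₁₂ = μ; since m₁ ≠ m₂ and μ ≠ 0 these are different, so C̃ fails the minor symmetry: the minor symmetric structure of the isotropic elasticity tensor breaks under coordinate transformation. -/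
/-- The isotropic (Lamé) elasticity tensor
`C_{ijkl} = λ δ_{ij} δ_{kl} + μ (δ_{ik} δ_{jl} + δ_{il} δ_{jk})`. -/
noncomputable def lameTensor {N : ℕ} (lam mu : ℝ) :
    Fin N → Fin N → Fin N → Fin N → ℝ :=
  fun i j k l =>
    lam * kron i j * kron k l + mu * (kron i k * kron j l + kron i l * kron j k)

/-- the 2-dimensional isotropic Lamé tensor is major and minor symmetric,
but its push-forward by `M = diag(m₁, m₂)` with `m₁ ≠ m₂` and `μ ≠ 0` satisfies
`C̃₁₂₁₂ = (m₂/m₁) μ ≠ μ = C̃₂₁₁₂`: the minor symmetry breaks under coordinate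
transformation. -/
theorem lame_minor_symmetry_breaks (lam mu : ℝ) (hmu : mu ≠ 0)
    (m₁ m₂ : ℝ) (hm₁ : 0 < m₁) (hm₂ : 0 < m₂) (hne : m₁ ≠ m₂) :
    (∀ i j k l : Fin 2, lameTensor lam mu i j k l = lameTensor lam mu k l i j) ∧
    (∀ i j k l : Fin 2, lameTensor lam mu i j k l = lameTensor lam mu j i k l) ∧
    pushForward (lameTensor lam mu) (Matrix.diagonal ![m₁, m₂]) 0 1 0 1
      = (m₂ / m₁) * mu ∧
    pushForward (lameTensor lam mu) (Matrix.diagonal ![m₁, m₂]) 1 0 0 1 = mu ∧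
    pushForward (lameTensor lam mu) (Matrix.diagonal ![m₁, m₂]) 0 1 0 1
      ≠ pushForward (lameTensor lam mu) (Matrix.diagonal ![m₁, m₂]) 1 0 0 1 := by
  have symm : ∀ i j : Fin 2, kron i j = kron j i := by
    intro i j
    simp only [kron, eq_comm]
  have h1 : pushForward (lameTensor lam mu) (Matrix.diagonal ![m₁, m₂]) 0 1 0 1
      = (m₂ / m₁) * mu := by
    simp [pushForward, lameTensor, kron, Fin.sum_univ_two, Matrix.det_fin_two]
    field_simp
  have h2 : pushForward (lameTensor lam mu) (Matrix.diagonal ![m₁, m₂]) 1 0 0 1 = mu := by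
    simp [pushForward, lameTensor, kron, Fin.sum_univ_two, Matrix.det_fin_two]
    field_simp
  refine ⟨?_, ?_, h1, h2, ?_⟩
  · intro i j k l
    simp only [lameTensor]
    rw [symm k i, symm l j, symm k j, symm l i]
    ring
  · intro i j k l
    simp only [lameTensor]
    rw [symm j i]
    ring
  · rw [h1, h2]
    intro h
    have h3 : m₂ / m₁ = 1 := mul_right_cancel₀ hmu (by rw [h, one_mul])
    rw [div_eq_one_iff_eq hm₁.ne'] at h3
    exact hne h3.symm
end
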